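/- Let A be an associative k-algebra and a_1, …, a_m ∈ A. If P_{≥1}(a_1,…,a_m) ⊆ P_{≤ d−1}(a_1,…,a_m) for some d ≥ 1, then every element of the subspace k a_1 + … + k a_m is algebraic of degree at most M_{d,m}. -/

import Mathlib

/-- `pWord a i` is the polynomial `p_{i_1,…,i_m}(a_1,…,a_m)`: the sum, over all distinct
words in `m` letters containing exactly `i_j` occurrences of letter `j` for each `j`,
of the corresponding products of `a_1,…,a_m`. -/
noncomputable def pWord {A : Type*} [Ring A] {m : ℕ} (a : Fin m → A) (i : Fin m → ℕ) : A :=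
  ∑ w ∈ (Finset.univ : Finset (Fin (∑ j, i j) → Fin m)).filter
      (fun w => ∀ j, (List.ofFn w).count j = i j),
    ((List.ofFn w).map a).prod

/-- `Pdeg k a n` is `P_n(a_1,…,a_m)`, the `k`-span of
`{p_{i_1,…,i_m}(a_1,…,a_m) : i_1+…+i_m = n}`. -/
noncomputable def Pdeg (k : Type*) [Field k] {A : Type*} [Ring A] [Algebra k A]
    {m : ℕ} (a : Fin m → A) (n : ℕ) : Submodule k A :=
  Submodule.span k {x | ∃ i : Fin m → ℕ, (∑ j, i j) = n ∧ x = pWord a i}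

/-!
Expanding the `n`-th power of `u = ∑ c_j a_j` over words and grouping the words by content gives
`u ^ n = ∑ c^i p_i(a)`, the sum running over the exponents `i` with `i_1 + … + i_m = n`; hence
`u ^ n ∈ P_n`. By hypothesis all powers `u, …, u ^ M` with `M = M_{d,m}` then lie in `P_{≤ d-1}`,
which is spanned by one element for each nonzero exponent of size less than `d`. There are `M - 1`
of these, so some power of `u` of degree at most `M` is a combination of the lower ones;
multiplying by a further power of `u` moves this relation to degree `M`.
-/

section AlgebraicOfDegreeLE

/-- `u` is algebraic of degree at most `d` over `R`. As in the theory of algebras that need not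
have a unit, the relation has no constant term. For `d = 0` it reads `1 = 0`. -/
def IsAlgebraicOfDegreeLE (R : Type*) {A : Type*} [CommSemiring R] [Semiring A] [Algebra R A]
    (u : A) (d : ℕ) : Prop :=
  u ^ d ∈ Submodule.span R ((fun i : ℕ => u ^ i) '' Set.Icc 1 (d - 1))

theorem IsAlgebraicOfDegreeLE.mono {R A : Type*} [CommSemiring R] [Semiring A] [Algebra R A]
    {u : A} {d e : ℕ} (h : IsAlgebraicOfDegreeLE R u d) (hde : d ≤ e) :
    IsAlgebraicOfDegreeLE R u e := by
  obtain ⟨l, rfl⟩ := Nat.exists_eq_add_of_le hde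
  have hmul := Submodule.mem_map_of_mem (f := LinearMap.mulRight R (u ^ l)) h
  rw [LinearMap.mulRight_apply, ← pow_add, Submodule.map_span, Set.image_image] at hmul
  refine Submodule.span_mono ?_ hmul
  rintro _ ⟨i, ⟨hi, hid⟩, rfl⟩
  exact ⟨i + l, ⟨by omega, by omega⟩, pow_add u i l⟩

variable {k A : Type*} [Field k] [Ring A] [Algebra k A] {u : A} {n : ℕ}

theorem linearIndepOn_pow_of_not_isAlgebraicOfDegreeLE (h : ¬ IsAlgebraicOfDegreeLE k u n) :
    LinearIndepOn k (fun i : ℕ => u ^ i) (Set.Icc 1 n) := by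
  induction n with
  | zero => simp
  | succ n ih =>
    rw [← Set.insert_Icc_right_eq_Icc_add_one (by omega), linearIndepOn_insert (by simp)]
    exact ⟨ih fun hn => h (hn.mono n.le_succ), h⟩

theorem isAlgebraicOfDegreeLE_of_finrank_lt {U : Submodule k A} [FiniteDimensional k U]
    (hpow : ∀ i ∈ Set.Icc 1 n, u ^ i ∈ U) (hU : Module.finrank k U < n) :
    IsAlgebraicOfDegreeLE k u n := by
  by_contra h
  have hli := linearIndepOn_pow_of_not_isAlgebraicOfDegreeLE h
  have hle : Submodule.span k (Set.range fun i : Set.Icc 1 n => u ^ (i : ℕ)) ≤ U :=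
    Submodule.span_le.2 (Set.range_subset_iff.2 fun i => hpow i i.2)
  have hcard : n ≤ Module.finrank k U := by
    simpa [finrank_span_eq_card hli] using Submodule.finrank_mono hle
  omega

end AlgebraicOfDegreeLE

section Words

/-- The content of a word `w` of length `n` in the alphabet `ι`: the number of occurrences of each
letter. It is computed on `List.ofFn w` to agree with `pWord`. -/
def wordContent {ι : Type*} [DecidableEq ι] {n : ℕ} (w : Fin n → ι) (j : ι) : ℕ :=
  (List.ofFn w).count j

theorem wordContent_eq_card {ι : Type*} [DecidableEq ι] {n : ℕ} (w : Fin n → ι) (j : ι) :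
    wordContent w j = Finset.card {t | w t = j} := by
  rw [wordContent, ← Multiset.coe_count, ← Fin.univ_val_map, Multiset.count_map]
  simp only [eq_comm, Finset.card_def, Finset.filter_val]

theorem sum_wordContent {ι : Type*} [Fintype ι] [DecidableEq ι] {n : ℕ} (w : Fin n → ι) :
    ∑ j, wordContent w j = n := by
  simp only [wordContent_eq_card,
    ← Finset.card_eq_sum_card_fiberwise (fun t _ => Finset.mem_univ (w t)), Finset.card_fin]

theorem prod_pow_wordContent {ι M : Type*} [Fintype ι] [DecidableEq ι] [CommMonoid M] {n : ℕ}
    (c : ι → M) (w : Fin n → ι) : ∏ j, c j ^ wordContent w j = ∏ t, c (w t) := by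
  simp only [wordContent_eq_card, ← Finset.prod_const, Finset.prod_fiberwise']

theorem sum_smul_pow_eq_sum_words {R A ι : Type*} [CommSemiring R] [Semiring A] [Algebra R A]
    [Fintype ι] (c : ι → R) (a : ι → A) (n : ℕ) :
    (∑ j, c j • a j) ^ n = ∑ w : Fin n → ι, (∏ t, c (w t)) • (List.ofFn (a ∘ w)).prod := by
  rw [← MultilinearMap.mkPiAlgebraFin_apply_const (R := R), MultilinearMap.map_sum]
  simp only [MultilinearMap.map_smul_univ, MultilinearMap.mkPiAlgebraFin_apply, Function.comp_def]

end Words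

section CountingExponents

theorem card_piAntidiag_eq_multichoose {ι : Type*} [DecidableEq ι] (s : Finset ι) (n : ℕ) :
    (s.piAntidiag n).card = s.card.multichoose n := by
  rw [← Finset.card_finsuppAntidiag_nat_eq_multichoose, Finset.finsuppAntidiag, Finset.card_map,
    Finset.card_attach]

theorem sum_Icc_one_multichoose_add_one (n k : ℕ) :
    ∑ i ∈ Finset.Icc 1 n, k.multichoose i + 1 = (n + k).choose k := by
  rw [← Nat.sum_range_multichoose, Finset.range_eq_Ico,
    Finset.sum_eq_sum_Ico_succ_bot n.add_one_pos, Nat.multichoose_zero_right, add_comm, zero_add,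
    Finset.Ico_add_one_right_eq_Icc]

end CountingExponents

section SymmetrizedProducts

variable {A : Type*} [Ring A] {m : ℕ}

theorem pWord_eq_sum_wordContent_eq (a : Fin m → A) {i : Fin m → ℕ} {n : ℕ} (hi : ∑ j, i j = n) :
    pWord a i = ∑ w : Fin n → Fin m with wordContent w = i, (List.ofFn (a ∘ w)).prod := by
  subst hi
  simp only [pWord, wordContent, funext_iff, List.map_ofFn]

theorem sum_smul_pow_eq_sum_pWord {R : Type*} [CommSemiring R] [Algebra R A] (c : Fin m → R)
    (a : Fin m → A) (n : ℕ) :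
    (∑ j, c j • a j) ^ n =
      ∑ i ∈ Finset.piAntidiag Finset.univ n, (∏ j, c j ^ i j) • pWord a i := by
  have hcontent (w : Fin n → Fin m) (_ : w ∈ Finset.univ) :
      wordContent w ∈ Finset.piAntidiag Finset.univ n := by simp [sum_wordContent]
  rw [sum_smul_pow_eq_sum_words, ← Finset.sum_fiberwise_of_maps_to hcontent]
  refine Finset.sum_congr rfl fun i hi => ?_
  rw [pWord_eq_sum_wordContent_eq a (Finset.mem_piAntidiag.1 hi).1, Finset.smul_sum]
  refine Finset.sum_congr rfl fun w hw => ?_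
  rw [← prod_pow_wordContent, (Finset.mem_filter.1 hw).2]

variable {k : Type*} [Field k] [Algebra k A]

theorem pow_mem_Pdeg_of_mem_span_range {a : Fin m → A} {u : A}
    (hu : u ∈ Submodule.span k (Set.range a)) (n : ℕ) : u ^ n ∈ Pdeg k a n := by
  obtain ⟨c, rfl⟩ := (Submodule.mem_span_range_iff_exists_fun k).1 hu
  rw [sum_smul_pow_eq_sum_pWord]
  exact Submodule.sum_mem _ fun i hi => Submodule.smul_mem _ _ <|
    Submodule.subset_span ⟨i, (Finset.mem_piAntidiag.1 hi).1, rfl⟩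

theorem biSup_Pdeg_eq_span [DecidableEq A] (a : Fin m → A) (s : Finset ℕ) :
    ⨆ n ∈ s, Pdeg k a n =
      Submodule.span k
        ((s.biUnion (Finset.piAntidiag Finset.univ)).image (pWord a) : Set A) := by
  simp only [Pdeg, ← Submodule.span_iUnion]
  congr 1
  ext x
  simp [eq_comm]

instance finiteDimensional_biSup_Pdeg (a : Fin m → A) (s : Finset ℕ) :
    FiniteDimensional k ↥(⨆ n ∈ s, Pdeg k a n) := by
  classical
  rw [biSup_Pdeg_eq_span]
  infer_instance

theorem finrank_biSup_Pdeg_le (a : Fin m → A) (s : Finset ℕ) :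
    Module.finrank k ↥(⨆ n ∈ s, Pdeg k a n) ≤ ∑ n ∈ s, m.multichoose n := by
  classical
  calc
    Module.finrank k ↥(⨆ n ∈ s, Pdeg k a n)
      ≤ ((s.biUnion (Finset.piAntidiag Finset.univ)).image (pWord a)).card := by
        rw [biSup_Pdeg_eq_span]
        exact finrank_span_finset_le_card _
    _ ≤ (s.biUnion (Finset.piAntidiag (Finset.univ : Finset (Fin m)))).card :=
        Finset.card_image_le
    _ ≤ ∑ n ∈ s, (Finset.piAntidiag (Finset.univ : Finset (Fin m)) n).card :=
        Finset.card_biUnion_le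
    _ = ∑ n ∈ s, m.multichoose n := by
        simp only [card_piAntidiag_eq_multichoose, Finset.card_fin]

end SymmetrizedProducts

/-- If `P_{≥1}(a_1,…,a_m) ⊆ P_{≤ d−1}(a_1,…,a_m)` for some `d ≥ 1`, then every element
of the subspace `k a_1 + … + k a_m` is algebraic of degree at most
`M_{d,m} = C(d+m−1, m)`. -/
theorem algebraic_of_Pge_le_Ple
    (k : Type*) [Field k] (A : Type*) [Ring A] [Algebra k A]
    (m d : ℕ) (hd : 1 ≤ d) (a : Fin m → A)
    (h : (⨆ n ∈ Set.Ici 1, Pdeg k a n) ≤ ⨆ n ∈ Finset.Icc 1 (d - 1), Pdeg k a n) :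
    ∀ u ∈ Submodule.span k (Set.range a),
      u ^ ((d + m - 1).choose m) ∈
        Submodule.span k ((fun i : ℕ => u ^ i) '' Set.Icc 1 ((d + m - 1).choose m - 1)) := by
  intro u hu
  have hpow : ∀ n ∈ Set.Icc 1 ((d + m - 1).choose m),
      u ^ n ∈ ⨆ j ∈ Finset.Icc 1 (d - 1), Pdeg k a j := fun n hn =>
    h (Submodule.mem_iSup_of_mem n <| Submodule.mem_iSup_of_mem hn.1 <|
      pow_mem_Pdeg_of_mem_span_range hu n)
  refine isAlgebraicOfDegreeLE_of_finrank_lt hpow ?_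
  calc
    Module.finrank k ↥(⨆ n ∈ Finset.Icc 1 (d - 1), Pdeg k a n)
      ≤ ∑ n ∈ Finset.Icc 1 (d - 1), m.multichoose n := finrank_biSup_Pdeg_le a _
    _ < (d - 1 + m).choose m := by
        rw [← sum_Icc_one_multichoose_add_one]
        exact Nat.lt_succ_self _
    _ = (d + m - 1).choose m := by rw [Nat.sub_add_comm hd]
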